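/- For every integer k ≥ 3, the image of the variable z in the quotient ring ℂ[x_0,…,x_k,a,b,c,z]/I(k) is a nonzerodivisor (a regular element for V(k)). -/

import Mathlib

/-!
Why `z` is regular. The recurrence says that `x` solves the linear recurrence with characteristic
form `f = a t² + b s t + c s²`. If `(s : t)` is a root of `f`, so is `(at : cs)`, and superposing the
two gives the solutions `x_i = s^i t^(k-i) + τ (at)^i (cs)^(k-i)`. Together with
`z = τ (at² - cs²)² (st)^(k-2)` they define a homomorphism `phi` from `R k` to `D[τ]`, where
`D = ℂ[s,t,a,b,c]/(f)` is a domain. It kills `I(k)` (`phi_Ik`): after deleting two rows, `N` is block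
triangular, so `det N(p,q) = a^p K c^(k-1-q)` with `K` a continuant (`Nsub_det`), which has a closed
form modulo `f` (`cont_geom`). Also `phi z ≠ 0`.

At `τ = 0` the map `phi` becomes the Veronese substitution `theta` modulo `f`, and the kernel of the
latter is `I(k) + (z)` (`mem_of_dvd_theta`): modulo `I(k) + (z)` a monomial in the `x_i` depends only
on its degree and its index sum, which gives a linear retraction `sigma` of `theta`, and `sigma`
kills all multiples of `f` by the recurrences.

Hence `P = ker phi` satisfies `P ⊆ I(k) + (z)`, and then `P ⊆ I(k) + zP` because `phi z` is a
nonzero element of a domain. All generators are homogeneous for the grading with `deg x_i = 1`,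
`deg a = deg b = deg c = 0`, `deg z = 2`, so induction on the degree shows that homogeneous elements
of `P` lie in `I(k)` (`mem_Ik_of_homogeneous`). If `z g ∈ I(k)`, every homogeneous component of `g`
lies in `P`, hence in `I(k)`.
-/

/-!
The polar variety `V(k) ⊆ 𝔸^{k+5}`: for `k ≥ 3` the quotient
`ℂ[x_0,…,x_k,a,b,c,z]/I(k)` is an integral domain of Krull dimension 5,
and likewise for the `k = 2` complete intersection.
-/

open MvPolynomial

noncomputable section

/-- The ambient polynomial ring `ℂ[x_0,…,x_k,a,b,c,z]`:
variables are `Sum.inl i` for `x_i` (`0 ≤ i ≤ k`) and `Sum.inr 0,1,2,3`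
for `a, b, c, z`. -/
abbrev Vk.R (k : ℕ) : Type := MvPolynomial (Fin (k + 1) ⊕ Fin 4) ℂ

namespace Vk

variable (k : ℕ)

/-- The variable `x_i` (for `i ≤ k`; junk value `0` out of range). -/
def xv (i : ℕ) : R k := if h : i ≤ k then X (Sum.inl ⟨i, by omega⟩) else 0

/-- The variable `a`. -/
def av : R k := X (Sum.inr 0)

/-- The variable `b`. -/
def bv : R k := X (Sum.inr 1)

/-- The variable `c`. -/
def cv : R k := X (Sum.inr 2)

/-- The variable `z`. -/
def zv : R k := X (Sum.inr 3)

/-- Entry of the `k × (k-2)` matrix `N`: `a` on the diagonal `r = s`,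
`b` for `r = s+1`, `c` for `r = s+2`, `0` otherwise. -/
def Nent (r s : ℕ) : R k :=
  if r = s then av k else if r = s + 1 then bv k else if r = s + 2 then cv k else 0

/-- The index (among `0,…,k-1`) of the `t`-th remaining row after deleting
rows `p` and `q` (where `p < q`). -/
def skip (p q t : ℕ) : ℕ := if t < p then t else if t < q - 1 then t + 1 else t + 2

/-- The `(k-2) × (k-2)` submatrix `N(p,q)` of `N` obtained by deleting rows
`p` and `q`. -/
def Nsub (p q : ℕ) : Matrix (Fin (k - 2)) (Fin (k - 2)) (R k) :=
  fun t s => Nent k (skip p q (t : ℕ)) (s : ℕ)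

/-- The generators of the ideal `I(k)`: the recurrence relations
`a x_{i-1} + b x_i + c x_{i+1}` for `1 ≤ i ≤ k-1` together with the Cramer
relations `x_p x_{q+1} - x_{p+1} x_q - (-1)^{q-p-1} z det N(p,q)` for
`0 ≤ p < q ≤ k-1`. -/
def Igen : Set (R k) :=
  { P | ∃ i : ℕ, 1 ≤ i ∧ i ≤ k - 1 ∧
      P = av k * xv k (i - 1) + bv k * xv k i + cv k * xv k (i + 1) } ∪
  { P | ∃ p q : ℕ, p < q ∧ q ≤ k - 1 ∧
      P = xv k p * xv k (q + 1) - xv k (p + 1) * xv k q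
          - (-1) ^ (q - p - 1) * zv k * (Nsub k p q).det }

/-- The ideal `I(k)` defining the polar variety `V(k)`. -/
def Ik : Ideal (R k) := Ideal.span (Igen k)

end Vk

/-! ### The determinants `det N(p,q)` and the Cramer relations -/

namespace Vk

/-- The continuant: the determinant of the `n × n` tridiagonal Toeplitz matrix with diagonal `b`,
superdiagonal `a` and subdiagonal `c`, given by its three-term recurrence. -/
def cont {A : Type*} [CommRing A] (a b c : A) : ℕ → A
  | 0 => 1
  | 1 => b
  | n + 2 => b * cont a b c (n + 1) - a * c * cont a b c n

/-- The analogue of `Nsub` whose size `n` is decoupled from the ambient ring `R k`, so that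
Laplace expansion can be used to induct on `n`. -/
def Msub (k n p q : ℕ) : Matrix (Fin n) (Fin n) (R k) :=
  fun t s => Nent k (skip p q (t : ℕ)) (s : ℕ)

lemma Msub_det_tri (k n : ℕ) :
    (Msub k n 0 (n + 1)).det = cont (av k) (bv k) (cv k) n := by
  induction n using Nat.strong_induction_on with
  | _ n ih =>
    match n with
    | 0 => simp [cont]
    | 1 => simp [cont, Msub, Nent, skip]
    | n + 2 =>
      rw [Matrix.det_succ_row_zero, Fin.sum_univ_succ, Fin.sum_univ_succ, Finset.sum_eq_zero]
      · have h1 : (Msub k (n + 2) 0 (n + 2 + 1)).submatrix Fin.succ (Fin.succAbove 0)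
            = Msub k (n + 1) 0 (n + 1 + 1) := by
          ext1 t s
          have := t.2
          simp only [Matrix.submatrix_apply, Msub, Nent, skip, Fin.succAbove_zero, Fin.val_succ]
          grind
        have h2 : ((Msub k (n + 2) 0 (n + 2 + 1)).submatrix Fin.succ
            (Fin.succAbove (Fin.succ 0))).det = cv k * (Msub k n 0 (n + 1)).det := by
          rw [Matrix.det_succ_column_zero, Fin.sum_univ_succ, Finset.sum_eq_zero]
          · have h3 : ((Msub k (n + 2) 0 (n + 2 + 1)).submatrix Fin.succ
                (Fin.succAbove (Fin.succ 0))).submatrix (Fin.succAbove 0) Fin.succ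
                = Msub k n 0 (n + 1) := by
              ext1 t s
              have := t.2
              simp only [Matrix.submatrix_apply, Msub, Nent, skip, Fin.succAbove_zero,
                Fin.val_succ, Fin.succ_succAbove_succ]
              grind
            rw [h3]
            simp [Msub, Nent, skip]
          · intro i _
            have := i.2
            simp [Msub, Nent, skip]
        rw [h1, h2, ih _ (by omega), ih _ (by omega)]
        simp [Msub, Nent, skip, cont]
        ring
      · intro i _
        simp [Msub, Nent, skip]

/-- Deleting rows `p < q` leaves a block triangular matrix with a triangular block of diagonal `a`,
a tridiagonal block, and a triangular block of diagonal `c`. -/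
lemma Msub_det (k n p q : ℕ) (hpq : p < q) (hq : q ≤ n + 1) :
    (Msub k n p q).det =
      av k ^ p * cont (av k) (bv k) (cv k) (q - p - 1) * cv k ^ (n + 1 - q) := by
  induction n generalizing p q with
  | zero =>
    obtain rfl : p = 0 := by omega
    obtain rfl : q = 1 := by omega
    simp [cont]
  | succ n ih =>
    rcases Nat.eq_zero_or_pos p with rfl | hp
    · rcases hq.eq_or_lt with rfl | hq'
      · rw [Msub_det_tri]; simp
      · rw [Matrix.det_succ_row _ (Fin.last n), Finset.sum_eq_single (Fin.last n)]
        · have h1 : (Msub k (n + 1) 0 q).submatrix (Fin.last n).succAbove (Fin.last n).succAbove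
              = Msub k n 0 q := by
            ext1 t s
            simp [Msub]
          rw [h1, ih 0 q hpq (by omega), show n + 1 + 1 - q = n + 1 - q + 1 by omega]
          have h2 : Msub k (n + 1) 0 q (Fin.last n) (Fin.last n) = cv k := by
            simp only [Msub, Nent, skip, Fin.val_last]
            grind
          rw [h2, Even.neg_one_pow (by simp)]
          ring
        · intro j _ hj
          have h2 : Msub k (n + 1) 0 q (Fin.last n) j = 0 := by
            have hj' : (j : ℕ) ≠ n := fun h => hj (Fin.ext h)
            have := j.2
            simp only [Msub, Nent, skip, Fin.val_last]
            grind
          simp [h2]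
        · simp
    · rw [Matrix.det_succ_row_zero, Fin.sum_univ_succ, Finset.sum_eq_zero]
      · have h1 : (Msub k (n + 1) p q).submatrix Fin.succ (Fin.succAbove 0)
            = Msub k n (p - 1) (q - 1) := by
          ext1 t s
          simp only [Matrix.submatrix_apply, Msub, Nent, skip, Fin.succAbove_zero, Fin.val_succ]
          grind
        rw [h1, ih _ _ (by omega) (by omega)]
        obtain ⟨p, rfl⟩ : ∃ p', p = p' + 1 := ⟨p - 1, by omega⟩
        obtain ⟨q, rfl⟩ : ∃ q', q = q' + 1 := ⟨q - 1, by omega⟩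
        simp [Msub, Nent, skip]
        ring
      · intro i _
        simp [Msub, Nent, skip, hp]

lemma Nsub_det (k p q : ℕ) (hk : 3 ≤ k) (hpq : p < q) (hq : q ≤ k - 1) :
    (Nsub k p q).det =
      av k ^ p * cont (av k) (bv k) (cv k) (q - p - 1) * cv k ^ (k - 1 - q) := by
  have h := Msub_det k (k - 2) p q hpq (by omega)
  rw [show k - 2 + 1 - q = k - 1 - q by omega] at h
  exact h

lemma map_cont {A B : Type*} [CommRing A] [CommRing B] (g : A →+* B) (a b c : A) (n : ℕ) :
    g (cont a b c n) = cont (g a) (g b) (g c) n := by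
  induction n using Nat.strong_induction_on with
  | _ n ih =>
    match n with
    | 0 => simp [cont]
    | 1 => simp [cont]
    | n + 2 => simp [cont, ih]

/-- If `(s : t)` is a root of the quadratic form, so is `(at : cs)`; the continuant is then a
complete homogeneous polynomial in `at²` and `cs²`, up to sign and a power of `st`. -/
lemma cont_geom {A : Type*} [CommRing A] (s t a b c : A)
    (hf : a * t ^ 2 + b * s * t + c * s ^ 2 = 0) (n : ℕ) :
    (a * t ^ 2 - c * s ^ 2) * ((-1) ^ n * (s * t) ^ n * cont a b c n) =
      (a * t ^ 2) ^ (n + 1) - (c * s ^ 2) ^ (n + 1) := by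
  induction n using Nat.strong_induction_on with
  | _ n ih =>
    match n with
    | 0 => simp [cont]
    | 1 => simp [cont]; linear_combination (-(a * t ^ 2 - c * s ^ 2)) * hf
    | n + 2 =>
      have h0 := ih n (by omega)
      have h1 := ih (n + 1) (by omega)
      simp only [cont]
      linear_combination (-b * s * t) * h1 - (a * c * s ^ 2 * t ^ 2) * h0 -
        ((a * t ^ 2) ^ (n + 2) - (c * s ^ 2) ^ (n + 2)) * hf

/-- The Cramer relations hold at the points `x_i = s^i t^(k-i) + τ (at)^i (cs)^(k-i)`. -/
lemma cramer_param {A : Type*} [CommRing A] (s t a b c τ : A) (k p q : ℕ)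
    (hf : a * t ^ 2 + b * s * t + c * s ^ 2 = 0) (hk : 3 ≤ k) (hpq : p < q) (hq : q ≤ k - 1)
    (x : ℕ → A) (hx : ∀ i, i ≤ k → x i = s ^ i * t ^ (k - i) + τ * (a * t) ^ i * (c * s) ^ (k - i)) :
    x p * x (q + 1) - x (p + 1) * x q - (-1) ^ (q - p - 1) *
      (τ * (a * t ^ 2 - c * s ^ 2) ^ 2 * (s * t) ^ (k - 2)) *
      (a ^ p * cont a b c (q - p - 1) * c ^ (k - 1 - q)) = 0 := by
  obtain ⟨n, rfl⟩ : ∃ n, q = p + n + 1 := ⟨q - p - 1, by omega⟩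
  obtain ⟨m, rfl⟩ : ∃ m, k = p + n + m + 2 := ⟨k - p - n - 2, by omega⟩
  rw [hx p (by omega), hx _ (by omega), hx _ (by omega), hx _ (by omega)]
  have e1 : p + n + 1 - p - 1 = n := by omega
  have e2 : p + n + m + 2 - 1 - (p + n + 1) = m := by omega
  have e3 : p + n + m + 2 - 2 = p + n + m := by omega
  have e4 : p + n + m + 2 - p = n + m + 2 := by omega
  have e5 : p + n + m + 2 - (p + n + 1 + 1) = m := by omega
  have e6 : p + n + m + 2 - (p + 1) = n + m + 1 := by omega
  have e7 : p + n + m + 2 - (p + n + 1) = m + 1 := by omega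
  simp only [e1, e2, e3, e4, e5, e6, e7]
  linear_combination (-τ * (a * t ^ 2 - c * s ^ 2) * (a * s * t) ^ p * (c * s * t) ^ m) *
    cont_geom s t a b c hf n

end Vk

/-! ### The section `z = 0` and the Veronese substitution -/

namespace Vk

/-- The coordinate ring `ℂ[x,a,b,c,z]/(I(k) + (z))` of the section `V(k) ∩ {z = 0}`. -/
abbrev Q (k : ℕ) : Type := R k ⧸ (Ik k ⊔ Ideal.span {zv k})

/-- The quotient map onto `Q k`. -/
abbrev mkQ (k : ℕ) : R k →ₐ[ℂ] Q k := Ideal.Quotient.mkₐ ℂ (Ik k ⊔ Ideal.span {zv k})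

lemma mkQ_eq_zero (k : ℕ) {p : R k} (hp : p ∈ Ik k) : mkQ k p = 0 :=
  Ideal.Quotient.eq_zero_iff_mem.mpr (Ideal.mem_sup_left hp)

lemma mkQ_z (k : ℕ) : mkQ k (zv k) = 0 :=
  Ideal.Quotient.eq_zero_iff_mem.mpr (Ideal.mem_sup_right (Ideal.subset_span rfl))

/-- The image of `x_i` in `Q k`. -/
def xq (k i : ℕ) : Q k := mkQ k (xv k i)

lemma xq_rec (k j : ℕ) (hj : j + 2 ≤ k) :
    mkQ k (av k) * xq k j + mkQ k (bv k) * xq k (j + 1) + mkQ k (cv k) * xq k (j + 2) = 0 := by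
  have h : av k * xv k (j + 1 - 1) + bv k * xv k (j + 1) + cv k * xv k (j + 1 + 1) ∈ Ik k :=
    Ideal.subset_span (Or.inl ⟨j + 1, by omega, by omega, rfl⟩)
  have h' := mkQ_eq_zero k h
  simpa [xq] using h'

lemma xq_swap_lt (k p q : ℕ) (hpq : p < q) (hq : q + 1 ≤ k) :
    xq k p * xq k (q + 1) = xq k (p + 1) * xq k q := by
  have h : xv k p * xv k (q + 1) - xv k (p + 1) * xv k q
          - (-1) ^ (q - p - 1) * zv k * (Nsub k p q).det ∈ Ik k :=
    Ideal.subset_span (Or.inr ⟨p, q, hpq, by omega, rfl⟩)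
  have h' := mkQ_eq_zero k h
  simp only [map_sub, map_mul, mkQ_z, mul_zero, zero_mul, sub_zero] at h'
  exact sub_eq_zero.mp h'

lemma xq_swap (k p q : ℕ) (hp : p + 1 ≤ k) (hq : q + 1 ≤ k) :
    xq k p * xq k (q + 1) = xq k (p + 1) * xq k q := by
  rcases lt_trichotomy p q with h | rfl | h
  · exact xq_swap_lt k p q h hq
  · ring
  · linear_combination -xq_swap_lt k q p h hp

lemma xq_low (k i j : ℕ) (h : i + j ≤ k) : xq k i * xq k j = xq k (i + j) * xq k 0 := by
  induction i generalizing j with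
  | zero => simp [mul_comm]
  | succ i ih =>
    rw [← xq_swap k i j (by omega) (by omega), ih (j + 1) (by omega)]
    congr 2; ring

lemma xq_high (k i j : ℕ) (hi : i ≤ k) (hj : j ≤ k) (h : k ≤ i + j) :
    xq k i * xq k j = xq k k * xq k (i + j - k) := by
  obtain ⟨d, rfl⟩ : ∃ d, k = j + d := ⟨k - j, by omega⟩
  induction d generalizing i j with
  | zero => rw [mul_comm]; congr 2; omega
  | succ d ih =>
    obtain ⟨i, rfl⟩ : ∃ i', i = i' + 1 := ⟨i - 1, by omega⟩
    rw [← xq_swap _ i j (by omega) (by omega)]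
    have := ih i (j + 1)
    rw [show j + 1 + d = j + (d + 1) by ring] at this
    rw [this (by omega) (by omega) (by omega)]
    congr 2; omega

/-- The common class in `Q k` of the monomials of degree `d` in the `x_i` with index sum `m`
(meaningful for `m ≤ k * d`), in the normal form `x_k^u x_i x_0^v`. -/
def xm (k : ℕ) : ℕ → ℕ → Q k
  | 0, _ => 1
  | d + 1, m => if m ≤ k then xq k m * xq k 0 ^ d else xq k k * xm k d (m - k)

lemma xq_mul_xm (k d m j : ℕ) (hj : j ≤ k) (hm : m ≤ k * d) :
    xq k j * xm k d m = xm k (d + 1) (j + m) := by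
  induction d generalizing m with
  | zero =>
    obtain rfl : m = 0 := by simpa using hm
    simp [xm, hj]
  | succ d ih =>
    by_cases hmk : m ≤ k
    · rw [xm, if_pos hmk, ← mul_assoc]
      by_cases hjm : j + m ≤ k
      · rw [xq_low k j m hjm, xm, if_pos hjm]; ring
      · rw [xq_high k j m hj hmk (by omega), xm, if_neg hjm, xm, if_pos (by omega)]; ring
    · rw [xm, if_neg hmk, mul_left_comm, ih (m - k) (by rw [mul_add] at hm; omega)]
      rw [xm.eq_def k (d + 1 + 1)]
      simp only
      rw [if_neg (by omega), show j + (m - k) = j + m - k by omega]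

lemma xm_rec (k d m : ℕ) (hk : 3 ≤ k) (hm : m + 2 ≤ k * d) :
    mkQ k (av k) * xm k d m + mkQ k (bv k) * xm k d (m + 1) + mkQ k (cv k) * xm k d (m + 2)
      = 0 := by
  obtain ⟨d, rfl⟩ : ∃ d', d = d' + 1 :=
    Nat.exists_eq_succ_of_ne_zero (by rintro rfl; simp at hm)
  -- split off one variable `x_j` with `j ≤ k - 2`
  obtain ⟨j, l, hj, hl, rfl⟩ : ∃ j l, j + 2 ≤ k ∧ l ≤ k * d ∧ m = j + l := by
    rw [mul_add] at hm
    refine ⟨min m (k - 2), m - min m (k - 2), ?_, ?_, ?_⟩ <;> omega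
  have h0 := xq_mul_xm k d l j (by omega) hl
  have h1 := xq_mul_xm k d l (j + 1) (by omega) hl
  have h2 := xq_mul_xm k d l (j + 2) (by omega) hl
  rw [show j + 1 + l = j + l + 1 by ring] at h1
  rw [show j + 2 + l = j + l + 2 by ring] at h2
  rw [← h0, ← h1, ← h2]
  linear_combination xm k d l * xq_rec k j hj

/-- The polynomial ring `ℂ[s,t,a,b,c]`, with the variables numbered in this order. -/
abbrev S : Type := MvPolynomial (Fin 5) ℂ

/-- The quadratic form `a t² + b s t + c s²`. -/
def fS : S := X 2 * X 1 ^ 2 + X 3 * X 0 * X 1 + X 4 * X 0 ^ 2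

/-- The Veronese substitution `x_i ↦ s^i t^(k-i)`, `z ↦ 0`, fixing `a, b, c`. -/
def theta (k : ℕ) : R k →ₐ[ℂ] S :=
  aeval (Sum.elim (fun i => X 0 ^ (i : ℕ) * X 1 ^ (k - i)) ![X 2, X 3, X 4, 0])

/-- The value of `sigma` on the monomial with exponent vector `e`. -/
def sigmaFun (k : ℕ) (e : Fin 5 →₀ ℕ) : Q k :=
  if k ∣ e 0 + e 1 then
    xm k ((e 0 + e 1) / k) (e 0) *
      (mkQ k (av k) ^ e 2 * mkQ k (bv k) ^ e 3 * mkQ k (cv k) ^ e 4)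
  else 0

/-- A `ℂ`-linear retraction of the Veronese substitution modulo `I(k) + (z)`: the monomial
`s^m t^n` goes to the class of `x`-monomials of degree `(m+n)/k` and index sum `m` if `k ∣ m + n`,
and to `0` otherwise. -/
def sigma (k : ℕ) : S →ₗ[ℂ] Q k :=
  (basisMonomials (Fin 5) ℂ).constr ℂ (sigmaFun k)

lemma sigma_monomial (k : ℕ) (e : Fin 5 →₀ ℕ) :
    sigma k (monomial e 1) = sigmaFun k e := by
  have := (basisMonomials (Fin 5) ℂ).constr_basis ℂ (sigmaFun k) e
  simpa [sigma] using this

lemma S_ext {M : Type*} [AddCommGroup M] [Module ℂ M] (f g : S →ₗ[ℂ] M)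
    (h : ∀ e, f (monomial e 1) = g (monomial e 1)) (p : S) : f p = g p := by
  have : f = g := (basisMonomials (Fin 5) ℂ).ext (fun e => by simpa using h e)
  rw [this]

lemma sigma_mul_of_monomial (k : ℕ) (u : S) (v : Q k)
    (h : ∀ e, sigma k (u * monomial e 1) = v * sigmaFun k e) (g : S) :
    sigma k (u * g) = v * sigma k g :=
  S_ext ((sigma k).comp (LinearMap.mulLeft ℂ u)) ((LinearMap.mulLeft ℂ v).comp (sigma k))
    (fun e => by simpa [sigma_monomial] using h e) g

lemma sigma_x (k j : ℕ) (hk : 3 ≤ k) (hj : j ≤ k) (g : S) :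
    sigma k (X 0 ^ j * X 1 ^ (k - j) * g) = xq k j * sigma k g := by
  refine sigma_mul_of_monomial k _ _ (fun e => ?_) g
  rw [X_pow_eq_monomial, X_pow_eq_monomial, monomial_mul, monomial_mul, one_mul, one_mul,
    sigma_monomial]
  simp only [sigmaFun, Finsupp.add_apply, Finsupp.single_apply]
  simp only [Fin.reduceEq, if_true, if_false, zero_add, add_zero, one_ne_zero, zero_ne_one]
  have e1 : j + e 0 + (k - j + e 1) = (e 0 + e 1) + k := by omega
  simp only [e1, Nat.dvd_add_self_right, Nat.add_div_right _ (show 0 < k by omega)]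
  split_ifs with h
  · rw [← mul_assoc (xq k j), xq_mul_xm k _ _ j hj]
    rw [Nat.mul_div_cancel' h]; omega
  · simp

lemma sigma_a (k : ℕ) (g : S) : sigma k (X 2 * g) = mkQ k (av k) * sigma k g := by
  refine sigma_mul_of_monomial k _ _ (fun e => ?_) g
  rw [X, monomial_mul, one_mul, sigma_monomial]
  simp only [sigmaFun, Finsupp.add_apply, Finsupp.single_apply]
  simp only [Fin.reduceEq, if_true, if_false, zero_add]
  split_ifs <;> ring

lemma sigma_b (k : ℕ) (g : S) : sigma k (X 3 * g) = mkQ k (bv k) * sigma k g := by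
  refine sigma_mul_of_monomial k _ _ (fun e => ?_) g
  rw [X, monomial_mul, one_mul, sigma_monomial]
  simp only [sigmaFun, Finsupp.add_apply, Finsupp.single_apply]
  simp only [Fin.reduceEq, if_true, if_false, zero_add]
  split_ifs <;> ring

lemma sigma_c (k : ℕ) (g : S) : sigma k (X 4 * g) = mkQ k (cv k) * sigma k g := by
  refine sigma_mul_of_monomial k _ _ (fun e => ?_) g
  rw [X, monomial_mul, one_mul, sigma_monomial]
  simp only [sigmaFun, Finsupp.add_apply, Finsupp.single_apply]
  simp only [Fin.reduceEq, if_true, if_false, zero_add]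
  split_ifs <;> ring

lemma sigma_f (k : ℕ) (hk : 3 ≤ k) (g : S) : sigma k (fS * g) = 0 := by
  rw [← zero_mul (sigma k g)]
  refine sigma_mul_of_monomial k _ _ (fun e => ?_) g
  have e1 : fS * monomial e 1 = X 2 * (X 1 ^ 2 * monomial e 1)
      + X 3 * (X 0 ^ 1 * (X 1 ^ 1 * monomial e 1)) + X 4 * (X 0 ^ 2 * monomial e 1) := by
    rw [fS]; ring
  rw [e1, map_add, map_add, sigma_a, sigma_b, sigma_c]
  simp only [X_pow_eq_monomial, monomial_mul, one_mul, sigma_monomial]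
  simp only [sigmaFun, Finsupp.add_apply, Finsupp.single_apply]
  simp only [Fin.reduceEq, if_true, if_false, zero_add, one_ne_zero, zero_ne_one]
  have i1 : e 0 + (2 + e 1) = e 0 + e 1 + 2 := by ring
  have i2 : 1 + e 0 + (1 + e 1) = e 0 + e 1 + 2 := by ring
  have i3 : 2 + e 0 + e 1 = e 0 + e 1 + 2 := by ring
  rw [i1, i2, i3, zero_mul]
  split_ifs with h
  · have h' := xm_rec k ((e 0 + e 1 + 2) / k) (e 0) hk (by rw [Nat.mul_div_cancel' h]; omega)
    rw [add_comm 1 (e 0), add_comm 2 (e 0)]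
    linear_combination (mkQ k (av k) ^ e 2 * mkQ k (bv k) ^ e 3 * mkQ k (cv k) ^ e 4) * h'
  · simp

lemma sigma_one (k : ℕ) : sigma k 1 = 1 := by
  have := sigma_monomial k 0
  rw [monomial_zero', C_1] at this
  rw [this]
  simp [sigmaFun, xm]

/-- `sigma` is semilinear over `theta`; with `g = 1` it is a retraction of `theta` modulo
`I(k) + (z)`. -/
lemma sigma_theta_mul (k : ℕ) (hk : 3 ≤ k) (p : R k) (g : S) :
    sigma k (theta k p * g) = mkQ k p * sigma k g := by
  induction p using MvPolynomial.induction_on generalizing g with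
  | C r =>
    rw [← algebraMap_eq, AlgHom.commutes, AlgHom.commutes, ← Algebra.smul_def, ← Algebra.smul_def,
      map_smul]
  | add p q hp hq => rw [map_add, map_add, add_mul, add_mul, map_add, hp, hq]
  | mul_X p i hp =>
    rw [map_mul (theta k), map_mul (mkQ k), mul_assoc, hp, mul_assoc]
    congr 1
    rcases i with i | i
    · have hx : X (Sum.inl i) = xv k i := by
        have := i.2
        rw [xv, dif_pos (by omega)]
      have ht : theta k (X (Sum.inl i)) = X 0 ^ (i : ℕ) * X 1 ^ (k - i) := by simp [theta]
      rw [ht, hx]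
      exact sigma_x k i hk (by have := i.2; omega) g
    · have ht : theta k (X (Sum.inr i)) = ![X 2, X 3, X 4, 0] i := by simp [theta]
      rw [ht]
      match i with
      | 0 => exact sigma_a k g
      | 1 => exact sigma_b k g
      | 2 => exact sigma_c k g
      | 3 =>
        have h : mkQ k (X (Sum.inr 3)) = 0 := mkQ_z k
        have h2 : (![X 2, X 3, X 4, 0] : Fin 4 → S) 3 = 0 := rfl
        rw [h, h2, zero_mul, zero_mul, map_zero]

/-- The section `V(k) ∩ {z = 0}` embeds into `ℂ[s,t,a,b,c]/(a t² + b s t + c s²)`. -/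
lemma mem_of_dvd_theta (k : ℕ) (hk : 3 ≤ k) (p : R k) (hp : fS ∣ theta k p) :
    p ∈ Ik k ⊔ Ideal.span {zv k} := by
  obtain ⟨g, hg⟩ := hp
  have h := sigma_theta_mul k hk p 1
  rw [mul_one, hg, sigma_f k hk, sigma_one, mul_one] at h
  exact Ideal.Quotient.eq_zero_iff_mem.mp h.symm

end Vk

/-! ### The parametrization of `V(k)` -/

namespace Vk

lemma fS_prime : Prime fS := by
  have hrel : IsRelPrime (X 1 ^ 2 : S) (X 3 * X 0 * X 1 + X 4 * X 0 ^ 2) := by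
    apply IsRelPrime.pow_left
    refine ((MvPolynomial.X_prime (R := ℂ) (i := (1 : Fin 5))).irreducible.isRelPrime_iff_not_dvd).mpr ?_
    rintro ⟨g, hg⟩
    have := congrArg (aeval ![(1 : ℂ), 0, 0, 0, 1]) hg
    simp at this
  have h := irreducible_mul_X_add (X 1 ^ 2 : S) (X 3 * X 0 * X 1 + X 4 * X 0 ^ 2) 2
    (pow_ne_zero _ (X_ne_zero _)) ?_ ?_ hrel
  · have e : fS = X 1 ^ 2 * X 2 + (X 3 * X 0 * X 1 + X 4 * X 0 ^ 2) := by rw [fS]; ring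
    rw [e]
    exact h.prime
  · intro h
    have := vars_pow _ _ h
    simp at this
  · intro h
    have h := vars_add_subset _ _ h
    rw [Finset.mem_union] at h
    rcases h with h | h
    · have h := vars_mul _ _ h
      rw [Finset.mem_union] at h
      rcases h with h | h
      · have h := vars_mul _ _ h
        simp at h
      · simp at h
    · have h := vars_mul _ _ h
      rw [Finset.mem_union] at h
      rcases h with h | h
      · simp at h
      · have := vars_pow _ _ h
        simp at this

/-- The domain `ℂ[s,t,a,b,c]/(a t² + b s t + c s²)`. -/
abbrev D : Type := S ⧸ Ideal.span {fS}

/-- The quotient map onto `D`. -/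
abbrev mkD : S →ₐ[ℂ] D := Ideal.Quotient.mkₐ ℂ (Ideal.span {fS})

instance D_isDomain : IsDomain D := by
  have : (Ideal.span {fS}).IsPrime :=
    (Ideal.span_singleton_prime fS_prime.ne_zero).mpr fS_prime
  exact Ideal.Quotient.isDomain _

/-- The image in `D[τ]` of the `i`-th variable of `S`. -/
abbrev dv (i : Fin 5) : Polynomial D := Polynomial.C (mkD (X i))

lemma dv_rel : dv 2 * dv 1 ^ 2 + dv 3 * dv 0 * dv 1 + dv 4 * dv 0 ^ 2 = 0 := by
  have h : mkD (X 2 * X 1 ^ 2 + X 3 * X 0 * X 1 + X 4 * X 0 ^ 2) = 0 :=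
    Ideal.Quotient.eq_zero_iff_mem.mpr (Ideal.subset_span rfl)
  simp only [map_add, map_mul, map_pow] at h
  simp only [dv, ← Polynomial.C_mul, ← Polynomial.C_pow, ← Polynomial.C_add, h, Polynomial.C_0]

/-- The image of `z` under `phi`. -/
def phiZ (k : ℕ) : Polynomial D :=
  Polynomial.X * (dv 2 * dv 1 ^ 2 - dv 4 * dv 0 ^ 2) ^ 2 * (dv 0 * dv 1) ^ (k - 2)

/-- The family of points of `V(k)` with coordinates in `D[τ]`: the solution
`x_i = s^i t^(k-i) + τ (at)^i (cs)^(k-i)` of the recurrence combines the two roots `(s : t)` and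
`(at : cs)` of the quadratic form. At `τ = 0` it specializes to `theta`. -/
def phi (k : ℕ) : R k →ₐ[ℂ] Polynomial D :=
  aeval (Sum.elim (fun i : Fin (k + 1) => dv 0 ^ (i : ℕ) * dv 1 ^ (k - i) +
    Polynomial.X * (dv 2 * dv 1) ^ (i : ℕ) * (dv 4 * dv 0) ^ (k - i)) ![dv 2, dv 3, dv 4, phiZ k])

lemma phi_x (k i : ℕ) (hi : i ≤ k) : phi k (xv k i) = dv 0 ^ i * dv 1 ^ (k - i) +
    Polynomial.X * (dv 2 * dv 1) ^ i * (dv 4 * dv 0) ^ (k - i) := by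
  rw [xv, dif_pos hi, phi, aeval_X]
  rfl

lemma phi_a (k : ℕ) : phi k (av k) = dv 2 := by rw [av, phi, aeval_X]; rfl
lemma phi_b (k : ℕ) : phi k (bv k) = dv 3 := by rw [bv, phi, aeval_X]; rfl
lemma phi_c (k : ℕ) : phi k (cv k) = dv 4 := by rw [cv, phi, aeval_X]; rfl
lemma phi_z (k : ℕ) : phi k (zv k) = phiZ k := by rw [zv, phi, aeval_X]; rfl

lemma phi_z_ne_zero (k : ℕ) : phi k (zv k) ≠ 0 := by
  -- `(s,t,a,b,c) = (1,1,1,-1,0)` is a zero of the quadratic form where the `τ`-coefficient is `1`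
  let ev : S →ₐ[ℂ] ℂ := aeval ![1, 1, 1, -1, 0]
  have hev : ∀ g ∈ Ideal.span {fS}, ev g = 0 := by
    intro g hg
    obtain ⟨h, rfl⟩ := Ideal.mem_span_singleton.mp hg
    rw [map_mul]
    simp [ev, fS]
  let evD : D →ₐ[ℂ] ℂ := Ideal.Quotient.liftₐ _ ev hev
  have hd : ∀ g, evD (mkD g) = ev g := fun g => rfl
  intro h0
  have h1 := congrArg (fun P => Polynomial.eval₂ evD.toRingHom 1 P) h0
  rw [phi_z, phiZ] at h1
  simp only [Polynomial.eval₂_mul, Polynomial.eval₂_pow, Polynomial.eval₂_sub, Polynomial.eval₂_X,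
    Polynomial.eval₂_C, Polynomial.eval₂_zero, AlgHom.toRingHom_eq_coe, RingHom.coe_coe, hd] at h1
  simp [ev] at h1

lemma phi_Ik (k : ℕ) (hk : 3 ≤ k) {p : R k} (hp : p ∈ Ik k) : phi k p = 0 := by
  suffices h : Ik k ≤ RingHom.ker (phi k) from h hp
  rw [Ik, Ideal.span_le]
  rintro P (⟨i, hi1, hi2, rfl⟩ | ⟨p, q, hpq, hq, rfl⟩)
  · obtain ⟨i, rfl⟩ : ∃ j, i = j + 1 := ⟨i - 1, by omega⟩
    obtain ⟨m, rfl⟩ : ∃ m, k = i + m + 2 := ⟨k - i - 2, by omega⟩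
    change phi _ _ = 0
    simp only [map_add, map_mul, phi_a, phi_b, phi_c]
    rw [phi_x _ _ (by omega), phi_x _ _ (by omega), phi_x _ _ (by omega)]
    have e1 : i + 1 - 1 = i := by omega
    have e2 : i + m + 2 - i = m + 2 := by omega
    have e3 : i + m + 2 - (i + 1) = m + 1 := by omega
    have e4 : i + m + 2 - (i + 1 + 1) = m := by omega
    simp only [e1, e2, e3, e4]
    linear_combination (dv 0 ^ i * dv 1 ^ m +
      Polynomial.X * (dv 2 * dv 1) ^ i * (dv 4 * dv 0) ^ m * dv 2 * dv 4) * dv_rel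
  · change phi _ _ = 0
    rw [Nsub_det k p q hk hpq hq]
    have hc := map_cont (B := Polynomial D) (phi k).toRingHom (av k) (bv k) (cv k) (q - p - 1)
    simp only [AlgHom.toRingHom_eq_coe, RingHom.coe_coe, phi_a, phi_b, phi_c] at hc
    simp only [map_sub, map_mul, map_pow, map_neg, map_one, hc, phi_a, phi_c, phi_z, phiZ]
    exact cramer_param (dv 0) (dv 1) (dv 2) (dv 3) (dv 4) Polynomial.X k p q dv_rel hk hpq hq
      (fun i => phi k (xv k i)) (fun i hi => phi_x k i hi)

lemma phi_coeff_zero (k : ℕ) (p : R k) :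
    Polynomial.aeval (0 : D) (phi k p) = mkD (theta k p) := by
  have h : ((Polynomial.aeval (0 : D)).restrictScalars ℂ).comp (phi k)
      = mkD.comp (theta k) := by
    apply MvPolynomial.algHom_ext
    rintro (i | i)
    · simp [phi, theta]
    · fin_cases i <;> simp [phi, theta, phiZ]
  exact DFunLike.congr_fun h p

lemma mem_of_phi_eq_zero (k : ℕ) (hk : 3 ≤ k) (p : R k) (hp : phi k p = 0) :
    p ∈ Ik k ⊔ Ideal.span {zv k} := by
  apply mem_of_dvd_theta k hk
  rw [← Ideal.mem_span_singleton]
  apply Ideal.Quotient.eq_zero_iff_mem.mp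
  have h := phi_coeff_zero k p
  rw [hp, map_zero] at h
  exact h.symm

/-! ### The grading -/

/-- The grading with `x_i` of degree `1`, `a, b, c` of degree `0` and `z` of degree `2`. -/
def wt (k : ℕ) : Fin (k + 1) ⊕ Fin 4 → ℕ := Sum.elim (fun _ => 1) ![0, 0, 0, 2]

lemma hom_x (k i : ℕ) : IsWeightedHomogeneous (wt k) (xv k i) 1 := by
  rw [xv]
  split_ifs
  · exact isWeightedHomogeneous_X ℂ (wt k) _
  · exact isWeightedHomogeneous_zero ℂ (wt k) 1

lemma hom_a (k : ℕ) : IsWeightedHomogeneous (wt k) (av k) 0 := isWeightedHomogeneous_X ℂ (wt k) _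
lemma hom_b (k : ℕ) : IsWeightedHomogeneous (wt k) (bv k) 0 := isWeightedHomogeneous_X ℂ (wt k) _
lemma hom_c (k : ℕ) : IsWeightedHomogeneous (wt k) (cv k) 0 := isWeightedHomogeneous_X ℂ (wt k) _
lemma hom_z (k : ℕ) : IsWeightedHomogeneous (wt k) (zv k) 2 := isWeightedHomogeneous_X ℂ (wt k) _

lemma hom_cont (k n : ℕ) :
    IsWeightedHomogeneous (wt k) (cont (av k) (bv k) (cv k) n) 0 := by
  induction n using Nat.strong_induction_on with
  | _ n ih =>
    match n with
    | 0 => exact isWeightedHomogeneous_one ℂ (wt k)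
    | 1 => exact hom_b k
    | n + 2 =>
      exact ((hom_b k).mul (ih _ (by omega))).sub (((hom_a k).mul (hom_c k)).mul (ih _ (by omega)))

attribute [local instance] MvPolynomial.weightedGradedAlgebra

lemma Ik_homogeneous (k : ℕ) (hk : 3 ≤ k) :
    (Ik k).IsHomogeneous (weightedHomogeneousSubmodule ℂ (wt k)) := by
  apply Ideal.homogeneous_span
  rintro P (⟨i, hi1, hi2, rfl⟩ | ⟨p, q, hpq, hq, rfl⟩)
  · exact ⟨1, (((hom_a k).mul (hom_x k _)).add ((hom_b k).mul (hom_x k _))).add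
      ((hom_c k).mul (hom_x k _))⟩
  · refine ⟨2, ?_⟩
    rw [Nsub_det k p q hk hpq hq]
    have hs : IsWeightedHomogeneous (wt k) ((-1 : R k) ^ (q - p - 1)) 0 := by
      simpa using (isWeightedHomogeneous_one ℂ (wt k)).neg.pow (q - p - 1)
    have hdet : IsWeightedHomogeneous (wt k)
        (av k ^ p * cont (av k) (bv k) (cv k) (q - p - 1) * cv k ^ (k - 1 - q)) 0 := by
      simpa using (((hom_a k).pow p).mul (hom_cont k (q - p - 1))).mul ((hom_c k).pow (k - 1 - q))
    have hz := (hs.mul (hom_z k)).mul hdet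
    exact (((hom_x k p).mul (hom_x k (q + 1))).sub ((hom_x k (p + 1)).mul (hom_x k q))).sub hz

lemma comp_z_mul (k n : ℕ) (r : R k) :
    weightedHomogeneousComponent (wt k) n (zv k * r) =
      if 2 ≤ n then zv k * weightedHomogeneousComponent (wt k) (n - 2) r else 0 := by
  have h := DirectSum.coe_decompose_mul_of_left_mem (weightedHomogeneousSubmodule ℂ (wt k))
    (b := r) n (hom_z k)
  have hd : ∀ (m : ℕ) (g : R k),
      (DirectSum.decompose (weightedHomogeneousSubmodule ℂ (wt k)) g m : R k) =
        weightedHomogeneousComponent (wt k) m g :=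
    fun m g => weightedDecomposition.decompose'_apply ℂ (wt k) g m
  rwa [hd, hd] at h

/-- Graded Nakayama: the kernel `P` of `phi` satisfies `P ⊆ I(k) + zP`, and `z` has positive
degree. -/
lemma mem_Ik_of_homogeneous (k : ℕ) (hk : 3 ≤ k) (n : ℕ) (p : R k)
    (hp : phi k p = 0) (hn : IsWeightedHomogeneous (wt k) p n) : p ∈ Ik k := by
  induction n using Nat.strong_induction_on generalizing p with
  | _ n ih =>
    obtain ⟨i, hi, y, hy, hiy⟩ := Submodule.mem_sup.mp (mem_of_phi_eq_zero k hk p hp)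
    obtain ⟨r, rfl⟩ := Ideal.mem_span_singleton.mp hy
    have hcomp := congrArg (weightedHomogeneousComponent (wt k) n) hiy
    rw [map_add, comp_z_mul, hn.weightedHomogeneousComponent_same] at hcomp
    have hin := weightedHomogeneousComponent_mem_of_mem ℂ (wt k) (Ik_homogeneous k hk) hi n
    rw [← hcomp]
    refine Ideal.add_mem _ hin ?_
    split_ifs at hcomp ⊢ with h2
    · refine Ideal.mul_mem_left _ _ (ih (n - 2) (by omega) _ ?_
        (weightedHomogeneousComponent_isWeightedHomogeneous (w := wt k) (n - 2) r))
      have h := congrArg (phi k) hcomp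
      rw [map_add, phi_Ik k hk hin, zero_add, hp, map_mul] at h
      exact (mul_eq_zero.mp h).resolve_left (phi_z_ne_zero k)
    · exact Ideal.zero_mem _

end Vk

/-- For every `k ≥ 3`, the image of `z` in `ℂ[x_0,…,x_k,a,b,c,z]/I(k)` is a
nonzerodivisor. -/
theorem Vk_z_regular (k : ℕ) (hk : 3 ≤ k) :
    Ideal.Quotient.mk (Vk.Ik k) (Vk.zv k) ∈ nonZeroDivisors (Vk.R k ⧸ Vk.Ik k) := by
  rw [mem_nonZeroDivisors_iff_right]
  intro y hy
  obtain ⟨g, rfl⟩ := Ideal.Quotient.mk_surjective y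
  rw [← map_mul, Ideal.Quotient.eq_zero_iff_mem, mul_comm] at hy
  rw [Ideal.Quotient.eq_zero_iff_mem]
  rw [mem_iff_weightedHomogeneousComponent_mem ℂ (Vk.wt k) (Vk.Ik_homogeneous k hk)]
  intro n
  refine Vk.mem_Ik_of_homogeneous k hk n _ ?_
    (weightedHomogeneousComponent_isWeightedHomogeneous (w := Vk.wt k) n g)
  have h := weightedHomogeneousComponent_mem_of_mem ℂ (Vk.wt k) (Vk.Ik_homogeneous k hk) hy (n + 2)
  rw [Vk.comp_z_mul, if_pos (by omega), Nat.add_sub_cancel] at h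
  have h' := Vk.phi_Ik k hk h
  rw [map_mul] at h'
  exact (mul_eq_zero.mp h').resolve_left (Vk.phi_z_ne_zero k)
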